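/- For all V, W ∈ PRT', the following quadratic relation holds in ℚ(q): a(V)·a(W) = Σ_{T ∈ PRT', deg(T) = deg(V) + deg(W)} a(T)·#N_{V,W}(T), the sum being finite since there are only finitely many planar reduced rooted trees of each degree. (This is the coefficientwise form of the identity Δ̂(EXP) = EXP ⊗̂ EXP for the generic planar exponential series.) -/

import Mathlib

inductive PTree : Type where
  | node : List PTree → PTree

namespace PTree

/-- the single-vertex tree -/
def x : PTree := node []

/-- the number of leaves of a tree -/
def deg : PTree → ℕ
  | node l => max 1 (l.attach.map fun t => deg t.1).sum
decreasing_by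
  have := List.sizeOf_lt_of_mem t.2
  simp; omega

/-- a tree is reduced if no vertex has arity 1 -/
inductive Reduced : PTree → Prop where
  | node (l : List PTree) (hlen : l.length ≠ 1) (h : ∀ t ∈ l, Reduced t) :
      Reduced (node l)

/-- the reduction of a tree -/
def red : PTree → PTree
  | node [t] => red t
  | node l => node (l.attach.map fun t => red t.1)
decreasing_by
  · simp; omega
  · have := List.sizeOf_lt_of_mem t.2
    simp; omega

mutual
/-- the spanning subtree `T_I` determined by a set `I ⊆ range (deg T)` of leaf positions
(counted from the left, starting at `0`) -/
def sub : PTree → Finset ℕ → PTree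
  | node l, I => node (subList l I)
/-- auxiliary: the list of spanning subtrees of the children, children without
selected leaves being dropped -/
def subList : List PTree → Finset ℕ → List PTree
  | [], _ => []
  | t :: ts, I =>
      (if (I.filter (· < t.deg)).Nonempty then [sub t (I.filter (· < t.deg))] else [])
        ++ subList ts ((I.filter fun j => t.deg ≤ j).image fun j => j - t.deg)
end

/-- the contraction `T|I`: the reduction of the spanning subtree, `1` (i.e. `none`) if `I = ∅` -/
def contract (T : PTree) (I : Finset ℕ) : Option PTree :=
  if I = ∅ then none else some (red (sub T I))

end PTree

/-- `PRT'`: finite planar rooted trees together with the empty tree `1 = none` -/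
abbrev OT := Option PTree

/-- `deg` on `PRT'` -/
def degO (o : OT) : ℕ := o.elim 0 PTree.deg

/-- membership in `PRT'` = reduced trees together with the empty tree `1` -/
def ROT (o : OT) : Prop := ∀ t, o = some t → t.Reduced

/-- contraction on `PRT'` -/
def contractO : OT → Finset ℕ → OT
  | none, _ => none
  | some t, I => PTree.contract t I

open Classical in
/-- `N_{S,T}(V)` as a finite set of subsets of the set of leaf positions of `V` -/
noncomputable def NFinset (S T V : OT) : Finset (Finset ℕ) :=
  (Finset.range (degO V)).powerset.filter fun I =>
    contractO V I = S ∧ contractO V (Finset.range (degO V) \ I) = T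

/-- `#N_{S,T}(V)` -/
noncomputable def Ncount (S T V : OT) : ℕ := (NFinset S T V).card

/-- the binomial coefficient `C(q,m) = q(q-1)⋯(q-m+1)/m!` in `ℚ(q)` -/
noncomputable def qChoose (m : ℕ) : RatFunc ℚ :=
  (∏ i ∈ Finset.range m, (RatFunc.X - (i : RatFunc ℚ))) / (m.factorial : RatFunc ℚ)

/-- the coefficients `a(T)` of the generic planar exponential series `EXP`:
`a(x) = 1` and `a(T) = (C(q,m)/(q^n - q))·a(T_1)⋯a(T_m)` for `T = node [T_1,…,T_m]`
of arity `m ≥ 2` and degree `n = deg T` (junk values on non-reduced trees) -/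
noncomputable def PTree.aTree : PTree → RatFunc ℚ
  | .node [] => 1
  | .node l =>
      (qChoose l.length / (RatFunc.X ^ (PTree.node l).deg - RatFunc.X)) *
        (l.attach.map fun t => aTree t.1).prod
decreasing_by
  have := List.sizeOf_lt_of_mem t.2
  simp; omega

/-- `a` on `PRT'`, with `a(1) = 1` -/
noncomputable def aCoeff (o : OT) : RatFunc ℚ := o.elim 1 PTree.aTree

/-!
Consider power series in a variable `s` over the free algebra on trees, with a tree of degree `n`
placed in front of `s ^ n`. If the trees of each monomial are grafted, the recursion defining `a`
becomes the functional equation `EXP(s) ^ q = EXP(q s)`, where `f ^ q = ∑ C(q, m) (f - 1) ^ m`.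
Since `q ^ n ≠ q` for `n ≥ 2`, a solution of this equation is determined by its coefficient of
degree `1`. The coproduct `T ↦ ∑ T|I ⊗ T|Iᶜ` extends to an algebra homomorphism `Δ` commuting with
grafting, so `Δ(EXP)` solves the equation; so does `EXP ⊗ EXP`, because binomial powers are
multiplicative on commuting series. Both are `x ⊗ 1 + 1 ⊗ x` in degree `1`, hence they are equal.
-/

open Finset PTree PowerSeries
open scoped MonoidAlgebra

local notation "ℚ(q)" => RatFunc ℚ

section BinomialPow

/-- The power `f ^ r = ∑ m, C(r, m) (f - 1) ^ m` of a power series with constant coefficient `1` to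
an arbitrary exponent `r`, over a possibly noncommutative ring. The sum in degree `n` is cut off at
`m = n`, beyond which `(f - 1) ^ m` does not contribute; for other constant coefficients the value
is junk. -/
noncomputable def binomialPow {R A : Type*} [CommRing R] [BinomialRing R] [Ring A] [Algebra R A]
    (r : R) (f : A⟦X⟧) : A⟦X⟧ :=
  .mk fun n => ∑ m ∈ range (n + 1), Ring.choose r m • coeff n ((f - 1) ^ m)

theorem coeff_pow_eq_zero_of_lt {A : Type*} [Semiring A] {h : A⟦X⟧} (hh : constantCoeff h = 0)
    {m n : ℕ} (hnm : n < m) : coeff n (h ^ m) = 0 :=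
  coeff_of_lt_order n <| (Nat.cast_lt.2 hnm).trans_le (le_order_pow_of_constantCoeff_eq_zero m hh)

theorem coeff_mapAlgHom {R A B : Type*} [CommSemiring R] [Semiring A] [Algebra R A] [Semiring B]
    [Algebra R B] (φ : A →ₐ[R] B) (n : ℕ) (f : A⟦X⟧) :
    coeff n (mapAlgHom φ f) = φ (coeff n f) := by
  rw [mapAlgHom_apply, coeff_map, RingHom.coe_coe]

section BinomialRing

variable {R A B : Type*} [CommRing R] [BinomialRing R] [Ring A] [Algebra R A] [Ring B] [Algebra R B]

theorem coeff_binomialPow (r : R) (f : A⟦X⟧) (n : ℕ) :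
    coeff n (binomialPow r f) = ∑ m ∈ range (n + 1), Ring.choose r m • coeff n ((f - 1) ^ m) :=
  coeff_mk _ _

theorem coeff_zero_binomialPow (r : R) (f : A⟦X⟧) : coeff 0 (binomialPow r f) = 1 := by
  simp [coeff_binomialPow]

theorem coeff_one_binomialPow (r : R) (f : A⟦X⟧) : coeff 1 (binomialPow r f) = r • coeff 1 f := by
  simp [coeff_binomialPow, sum_range_succ, coeff_one]

theorem coeff_binomialPow_eq_sum_of_lt (r : R) {f : A⟦X⟧} (hf : constantCoeff f = 1) {n M : ℕ}
    (hnM : n < M) :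
    coeff n (binomialPow r f) = ∑ m ∈ range M, Ring.choose r m • coeff n ((f - 1) ^ m) := by
  rw [coeff_binomialPow]
  refine sum_subset (range_mono hnM) fun m _ hm => ?_
  rw [coeff_pow_eq_zero_of_lt (by simp [hf]) (by simpa [Nat.lt_succ_iff] using hm), smul_zero]

theorem binomialPow_natCast (N : ℕ) {f : A⟦X⟧} (hf : constantCoeff f = 1) :
    binomialPow (N : R) f = f ^ N := by
  ext n
  have hexp : f ^ N = ∑ m ∈ range (N + 1), N.choose m • (f - 1) ^ m := by
    conv_lhs => rw [← sub_add_cancel f 1, (Commute.one_right (f - 1)).add_pow]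
    simp only [one_pow, mul_one, nsmul_eq_mul, Nat.cast_comm]
  rw [coeff_binomialPow_eq_sum_of_lt _ hf (Nat.lt_succ_of_le (le_max_left n N)), hexp, map_sum]
  simp only [Ring.choose_natCast, Nat.cast_smul_eq_nsmul, map_nsmul]
  refine (sum_subset (range_mono (by simp)) fun m _ hm => ?_).symm
  rw [Nat.choose_eq_zero_of_lt (by simpa [Nat.lt_succ_iff] using hm), zero_smul]

theorem binomialPow_mapAlgHom (φ : A →ₐ[R] B) (r : R) (f : A⟦X⟧) :
    binomialPow r (mapAlgHom φ f) = mapAlgHom φ (binomialPow r f) := by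
  ext n
  have hpow (m : ℕ) : (mapAlgHom φ f - 1) ^ m = mapAlgHom φ ((f - 1) ^ m) := by
    rw [map_pow, map_sub, map_one]
  simp only [coeff_binomialPow, hpow, coeff_mapAlgHom, map_sum, map_smul]

end BinomialRing

section Field

variable {K : Type*} [Field K] [CharZero K]

theorem ringChoose_eq_prod_range_div_factorial (r : K) (m : ℕ) :
    Ring.choose r m = (∏ i ∈ range m, (r - i)) / m.factorial := by
  rw [Ring.choose_eq_smul, ← Polynomial.aeval_eq_smeval, ← descPochhammer_eval_eq_prod_range,
    ← descPochhammer_map (Int.castRingHom K), Polynomial.eval_map, smul_eq_mul, div_eq_inv_mul]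
  rfl

variable (K) in
theorem exists_polynomial_eval_eq_ringChoose (m : ℕ) :
    ∃ p : Polynomial K, ∀ r : K, p.eval r = Ring.choose r m := by
  refine ⟨descPochhammer K m * Polynomial.C (m.factorial : K)⁻¹, fun r => ?_⟩
  rw [ringChoose_eq_prod_range_div_factorial, Polynomial.eval_mul, Polynomial.eval_C,
    descPochhammer_eval_eq_prod_range, div_eq_mul_inv]

-- The coefficients are polynomial in the exponent, so it is enough to treat natural exponents.
theorem binomialPow_mul_of_commute {A : Type*} [Ring A] [Algebra K A] (r : K) {f g : A⟦X⟧}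
    (hfg : Commute f g) (hf : constantCoeff f = 1) (hg : constantCoeff g = 1) :
    binomialPow r (f * g) = binomialPow r f * binomialPow r g := by
  ext n
  rw [← sub_eq_zero, ← Module.forall_dual_apply_eq_zero_iff K]
  intro φ
  choose p hp using exists_polynomial_eval_eq_ringChoose K
  let P : Polynomial K :=
    ∑ m ∈ range (n + 1), p m * Polynomial.C (φ (coeff n ((f * g - 1) ^ m)))
  let Q : Polynomial K :=
    ∑ ij ∈ HasAntidiagonal.antidiagonal n, ∑ k ∈ range (ij.1 + 1), ∑ l ∈ range (ij.2 + 1),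
      p k * p l * Polynomial.C (φ (coeff ij.1 ((f - 1) ^ k) * coeff ij.2 ((g - 1) ^ l)))
  have hP (s : K) : P.eval s = φ (coeff n (binomialPow s (f * g))) := by
    simp [P, Polynomial.eval_finsetSum, hp, coeff_binomialPow]
  have hQ (s : K) : Q.eval s = φ (coeff n (binomialPow s f * binomialPow s g)) := by
    simp [Q, Polynomial.eval_finsetSum, hp, coeff_mul, coeff_binomialPow, sum_mul_sum,
      mul_assoc, mul_left_comm]
  have hPQ : P = Q := by
    refine Polynomial.eq_of_infinite_eval_eq P Q <|
      (Set.infinite_range_of_injective (Nat.cast_injective (R := K))).mono ?_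
    rintro _ ⟨N, rfl⟩
    rw [Set.mem_ofPred_eq, hP, hQ, binomialPow_natCast N hf, binomialPow_natCast N hg,
      binomialPow_natCast N (by simp [hf, hg]), hfg.mul_pow]
  rw [map_sub, ← hP, ← hQ, hPQ, sub_self]

end Field

end BinomialPow

section IsExponential

/-- The functional equation `f(s) ^ q = f(q s)` of an exponential series, required to hold after `L`
has been applied to the coefficients; for planar trees, `L` is grafting. Since `L` fixes the
coefficients of `f`, the coefficient of degree `n` enters the equation in degree `n` only through
`q • coeff n f` and `q ^ n • coeff n f`. -/
structure IsExponential {R A : Type*} [CommRing R] [BinomialRing R] [Ring A] [Algebra R A]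
    (q : R) (L : A →ₗ[R] A) (f : A⟦X⟧) : Prop where
  constantCoeff_eq_one : constantCoeff f = 1
  fixed : ∀ n, L (coeff n f) = coeff n f
  map_coeff_binomialPow : ∀ n, L (coeff n (binomialPow q f)) = q ^ n • coeff n f

theorem coeff_pow_congr {A : Type*} [Semiring A] {h k : A⟦X⟧} {n : ℕ}
    (hhk : ∀ i < n, coeff i h = coeff i k) (m : ℕ) :
    ∀ i < n, coeff i (h ^ m) = coeff i (k ^ m) := by
  induction m with
  | zero => simp
  | succ m ih =>
    intro i hi
    simp only [pow_succ, coeff_mul]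
    refine sum_congr rfl fun p hp => ?_
    rw [HasAntidiagonal.mem_antidiagonal] at hp
    rw [ih p.1 (by lia), hhk p.2 (by lia)]

-- In a product of at least two factors without constant term, no factor of degree `n` contributes
-- to the coefficient of degree `n`.
theorem coeff_pow_congr_of_ne_one {A : Type*} [Semiring A] {h k : A⟦X⟧}
    (hh : constantCoeff h = 0) (hk : constantCoeff k = 0) {m n : ℕ} (hm : m ≠ 1)
    (hhk : ∀ i < n, coeff i h = coeff i k) : coeff n (h ^ m) = coeff n (k ^ m) := by
  obtain _ | _ | m := m
  · simp
  · exact absurd rfl hm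
  rw [pow_succ, pow_succ k, coeff_mul, coeff_mul]
  refine sum_congr rfl fun ⟨i, j⟩ hij => ?_
  rw [HasAntidiagonal.mem_antidiagonal] at hij
  obtain rfl | hi := Nat.eq_zero_or_pos i
  · simp [hh, hk]
  obtain rfl | hj := Nat.eq_zero_or_pos j
  · simp [hh, hk]
  rw [coeff_pow_congr hhk _ i (by lia), hhk j (by lia)]

theorem constantCoeff_mapAlgHom_eq_one {R A B : Type*} [CommSemiring R] [Semiring A] [Algebra R A]
    [Semiring B] [Algebra R B] (φ : A →ₐ[R] B) {f : A⟦X⟧} (hf : constantCoeff f = 1) :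
    constantCoeff (mapAlgHom φ f) = 1 := by
  rw [← coeff_zero_eq_constantCoeff_apply, coeff_mapAlgHom, coeff_zero_eq_constantCoeff_apply, hf,
    map_one]

namespace IsExponential

section BinomialRing

variable {R A B : Type*} [CommRing R] [BinomialRing R] [Ring A] [Algebra R A] [Ring B] [Algebra R B]
  {q : R} {L : A →ₗ[R] A} {f : A⟦X⟧}

theorem smul_coeff_eq (hf : IsExponential q L f) {n : ℕ} (hn : n ≠ 0) :
    (q ^ n - q) • coeff n f =
      ∑ m ∈ (range (n + 1)).erase 1, Ring.choose q m • L (coeff n ((f - 1) ^ m)) := by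
  have hsum := hf.map_coeff_binomialPow n
  rw [coeff_binomialPow, map_sum, ← add_sum_erase _ _ (mem_range.2 (by lia : 1 < n + 1))] at hsum
  have hone : L (coeff n (f - 1)) = coeff n f := by simp [coeff_one, hn, hf.fixed]
  rw [map_smul, pow_one, hone, Ring.choose_one_right] at hsum
  rw [sub_smul, ← hsum, add_sub_cancel_left]
  simp only [map_smul]

theorem map (hf : IsExponential q L f) (φ : A →ₐ[R] B) {L' : B →ₗ[R] B}
    (hφ : ∀ a, L' (φ a) = φ (L a)) : IsExponential q L' (mapAlgHom φ f) where
  constantCoeff_eq_one := constantCoeff_mapAlgHom_eq_one φ hf.constantCoeff_eq_one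
  fixed n := by rw [coeff_mapAlgHom, hφ, hf.fixed]
  map_coeff_binomialPow n := by
    rw [binomialPow_mapAlgHom, coeff_mapAlgHom, coeff_mapAlgHom, hφ, hf.map_coeff_binomialPow,
      map_smul]

end BinomialRing

variable {K A B C : Type*} [Field K] [CharZero K] [Ring A] [Algebra K A] [Ring B] [Algebra K B]
  [Ring C] [Algebra K C] {q : K} {L : A →ₗ[K] A} {f : A⟦X⟧}

theorem ext {g : A⟦X⟧} (hf : IsExponential q L f) (hg : IsExponential q L g)
    (hq : ∀ n, 2 ≤ n → q ^ n ≠ q) (h₁ : coeff 1 f = coeff 1 g) : f = g := by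
  ext n
  induction n using Nat.strong_induction_on with | _ n ih
  obtain rfl | rfl | hn : n = 0 ∨ n = 1 ∨ 2 ≤ n := by lia
  · rw [coeff_zero_eq_constantCoeff_apply, coeff_zero_eq_constantCoeff_apply,
      hf.constantCoeff_eq_one, hg.constantCoeff_eq_one]
  · exact h₁
  have hn₀ : n ≠ 0 := by lia
  have hlow : ∀ i < n, coeff i (f - 1) = coeff i (g - 1) := fun i hi => by simp [ih i hi]
  rw [← smul_right_inj (sub_ne_zero.2 (hq n hn)), hf.smul_coeff_eq hn₀, hg.smul_coeff_eq hn₀]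
  refine sum_congr rfl fun m hm => ?_
  rw [coeff_pow_congr_of_ne_one (by simp [hf.constantCoeff_eq_one])
    (by simp [hg.constantCoeff_eq_one]) (ne_of_mem_erase hm) hlow]

theorem mul {M : B →ₗ[K] B} {N : C →ₗ[K] C} {g : B⟦X⟧} (hf : IsExponential q L f)
    (hg : IsExponential q M g) (φ : A →ₐ[K] C) (ψ : B →ₐ[K] C)
    (hcomm : ∀ a b, Commute (φ a) (ψ b)) (hN : ∀ a b, N (φ a * ψ b) = φ (L a) * ψ (M b)) :
    IsExponential q N (mapAlgHom φ f * mapAlgHom ψ g) := by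
  have hf₁ := constantCoeff_mapAlgHom_eq_one φ hf.constantCoeff_eq_one
  have hg₁ := constantCoeff_mapAlgHom_eq_one ψ hg.constantCoeff_eq_one
  have hfg : Commute (mapAlgHom φ f) (mapAlgHom ψ g) := by
    ext i
    rw [coeff_mul, coeff_mul, ← Nat.sum_antidiagonal_swap]
    refine sum_congr rfl fun p _ => ?_
    rw [coeff_mapAlgHom, coeff_mapAlgHom]
    exact hcomm _ _
  refine ⟨by rw [map_mul, hf₁, hg₁, mul_one], fun n => ?_, fun n => ?_⟩
  · simp only [coeff_mul, map_sum, coeff_mapAlgHom, hN, hf.fixed, hg.fixed]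
  · rw [binomialPow_mul_of_commute q hfg hf₁ hg₁, binomialPow_mapAlgHom, binomialPow_mapAlgHom,
      coeff_mul, coeff_mul, map_sum, smul_sum]
    refine sum_congr rfl fun p hp => ?_
    simp only [coeff_mapAlgHom, hN, hf.map_coeff_binomialPow, hg.map_coeff_binomialPow, map_smul,
      smul_mul_smul_comm, ← pow_add, HasAntidiagonal.mem_antidiagonal.1 hp]

end IsExponential

end IsExponential

section LeafSets

/-- The positions in `I` which lie in the first tree of a forest, if that tree has `d` leaves. -/
def headLeaves (d : ℕ) (I : Finset ℕ) : Finset ℕ := I.filter (· < d)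

/-- The positions in `I` which lie beyond the first tree of a forest, renumbered from `0`, if that
tree has `d` leaves. -/
def tailLeaves (d : ℕ) (I : Finset ℕ) : Finset ℕ := (I.filter (d ≤ ·)).image (· - d)

variable {d e j : ℕ} {I : Finset ℕ}

theorem mem_headLeaves : j ∈ headLeaves d I ↔ j ∈ I ∧ j < d := mem_filter

theorem mem_tailLeaves : j ∈ tailLeaves d I ↔ d + j ∈ I := by
  simp only [tailLeaves, mem_image, mem_filter]
  constructor
  · rintro ⟨i, ⟨hi, hdi⟩, rfl⟩
    rwa [Nat.add_sub_cancel' hdi]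
  · exact fun h => ⟨d + j, ⟨h, by lia⟩, by lia⟩

theorem tailLeaves_subset (hI : I ⊆ range (d + e)) : tailLeaves d I ⊆ range e := fun j hj => by
  simpa using hI (mem_tailLeaves.1 hj)

theorem headLeaves_range_sdiff :
    headLeaves d (range (d + e) \ I) = range d \ headLeaves d I := by
  ext j
  simp only [mem_headLeaves, mem_sdiff, mem_range]
  grind

theorem tailLeaves_range_sdiff :
    tailLeaves d (range (d + e) \ I) = range e \ tailLeaves d I := by
  ext j
  simp [mem_tailLeaves]

theorem eq_empty_of_headLeaves_tailLeaves (hhead : headLeaves d I = ∅)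
    (htail : tailLeaves d I = ∅) : I = ∅ := by
  refine eq_empty_of_forall_notMem fun i hi => ?_
  by_cases hid : i < d
  · exact (notMem_empty i) (hhead ▸ mem_headLeaves.2 ⟨hi, hid⟩)
  · exact (notMem_empty (i - d)) (htail ▸ mem_tailLeaves.2 (by rwa [Nat.add_sub_cancel' (by lia)]))

theorem sum_powerset_range_add {M : Type*} [AddCommMonoid M] (d e : ℕ)
    (F : Finset ℕ → Finset ℕ → M) :
    ∑ I ∈ (range (d + e)).powerset, F (headLeaves d I) (tailLeaves d I) =
      ∑ J ∈ (range d).powerset, ∑ K ∈ (range e).powerset, F J K := by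
  rw [← sum_product']
  refine sum_nbij' (fun I => (headLeaves d I, tailLeaves d I))
    (fun p => p.1 ∪ p.2.image (d + ·)) (fun I hI => ?_) (fun p hp => ?_) (fun I _ => ?_)
    (fun p hp => ?_) (fun _ _ => rfl)
  · exact mem_product.2 ⟨mem_powerset.2 fun j hj => mem_range.2 (mem_headLeaves.1 hj).2,
      mem_powerset.2 (tailLeaves_subset (mem_powerset.1 hI))⟩
  · simp only [mem_product, mem_powerset, subset_iff, mem_range, mem_union, mem_image] at hp ⊢
    grind
  · ext j
    simp only [mem_union, mem_image, mem_headLeaves, mem_tailLeaves]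
    constructor
    · rintro (h | ⟨k, h, rfl⟩)
      exacts [h.1, h]
    · intro h
      by_cases hj : j < d
      · exact Or.inl ⟨h, hj⟩
      · exact Or.inr ⟨j - d, by rwa [Nat.add_sub_cancel' (by lia)], by lia⟩
  · simp only [mem_product, mem_powerset, subset_iff, mem_range] at hp
    ext j <;> simp only [mem_headLeaves, mem_tailLeaves, mem_union, mem_image]
    · grind
    · grind

end LeafSets

namespace PTree

/-- The degree of a forest, i.e. its number of leaves. -/
def degs (l : List PTree) : ℕ := (l.map deg).sum

@[simp] theorem degs_nil : degs [] = 0 := rfl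

@[simp] theorem degs_cons (t : PTree) (l : List PTree) : degs (t :: l) = deg t + degs l :=
  List.sum_cons

theorem deg_node (l : List PTree) : deg (node l) = max 1 (degs l) := by
  rw [deg, degs]
  exact congrArg _ (congrArg _ (List.attach_map_val (f := deg)))

theorem deg_pos (t : PTree) : 0 < deg t := by
  obtain ⟨l⟩ := t
  simp [deg_node]

theorem length_le_degs (l : List PTree) : l.length ≤ degs l := by
  induction l with
  | nil => simp
  | cons t l ih => simpa using by linarith [deg_pos t]

theorem deg_node_of_ne_nil {l : List PTree} (hl : l ≠ []) : deg (node l) = degs l := by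
  rw [deg_node, max_eq_right ((List.length_pos_iff.2 hl).trans_le (length_le_degs l))]

theorem red_singleton (t : PTree) : red (node [t]) = red t := by
  rw [red]

theorem red_node {l : List PTree} (hl : l.length ≠ 1) : red (node l) = node (l.map red) := by
  rw [red]
  · exact congrArg _ (List.attach_map_val (f := red))
  · rintro t rfl
    simp at hl

theorem subList_cons (t : PTree) (l : List PTree) (I : Finset ℕ) :
    subList (t :: l) I =
      (if (headLeaves t.deg I).Nonempty then [sub t (headLeaves t.deg I)] else []) ++
        subList l (tailLeaves t.deg I) := by
  rw [subList]
  rfl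

theorem subList_eq_nil_iff {l : List PTree} {I : Finset ℕ} (hI : I ⊆ range (degs l)) :
    subList l I = [] ↔ I = ∅ := by
  induction l generalizing I with
  | nil => simpa [subList] using hI
  | cons t l ih =>
    rw [degs_cons] at hI
    simp only [subList_cons, List.append_eq_nil_iff, ite_eq_right_iff, List.cons_ne_nil, imp_false,
      not_nonempty_iff_eq_empty, ih (tailLeaves_subset hI)]
    refine ⟨fun h => eq_empty_of_headLeaves_tailLeaves h.1 h.2, ?_⟩
    rintro rfl
    simp [headLeaves, tailLeaves]

/-- The contraction of a forest to a set of its leaves: each tree is contracted to its own leaves in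
the set, and trees without such leaves disappear. -/
def contractForest (l : List PTree) (I : Finset ℕ) : List PTree := (subList l I).map red

theorem contractForest_cons (t : PTree) (l : List PTree) (I : Finset ℕ) :
    contractForest (t :: l) I =
      (contract t (headLeaves t.deg I)).toList ++ contractForest l (tailLeaves t.deg I) := by
  rw [contractForest, subList_cons, List.map_append, contractForest, contract]
  congr 1
  split_ifs with hne hempty hempty
  · simp [hempty] at hne
  · rfl
  · rfl
  · exact absurd (not_nonempty_iff_eq_empty.1 hne) hempty

/-- Planar forests, whose concatenation is the product of the free monoid on trees. -/
abbrev Forest := FreeMonoid PTree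

/-- Grafting the trees of a forest onto a common root. A forest with fewer than two trees is left
alone: the empty forest stands for the empty tree `1`, and a root of arity `1` would be removed by
reduction. -/
def graft (w : Forest) : Forest :=
  if 2 ≤ w.length then .of (node w.toList) else w

/-- The forest representing an element of `PRT'`, the empty tree being the empty forest. -/
def word (o : OT) : Forest := .ofList o.toList

theorem word_none : word none = 1 := rfl

theorem word_some (t : PTree) : word (some t) = .of t := rfl

theorem word_injective : Function.Injective word :=
  FreeMonoid.ofList.injective.comp fun o o' h => by
    rw [← Option.head?_toList (o := o), h, Option.head?_toList]

theorem graft_word (o : OT) : graft (word o) = word o := by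
  cases o <;> exact if_neg (by simp [word, FreeMonoid.length])

theorem exists_word_eq {w : Forest} (hw : ¬2 ≤ w.length) : ∃ o, word o = w := by
  obtain ⟨_ | ⟨t, _ | _⟩, rfl⟩ := FreeMonoid.ofList.surjective w
  · exact ⟨none, rfl⟩
  · exact ⟨some t, rfl⟩
  · exact absurd (by simp [FreeMonoid.length]) hw

theorem graft_of_two_le_length {l : List PTree} (hl : 2 ≤ l.length) :
    graft (.ofList l) = word (some (node l)) :=
  if_pos hl

theorem word_contract_node {l : List PTree} {I : Finset ℕ} (hI : I ⊆ range (degs l)) :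
    word (contract (node l) I) = graft (.ofList (contractForest l I)) := by
  by_cases hempty : I = ∅
  · subst hempty
    rw [contractForest, (subList_eq_nil_iff hI).2 rfl]
    exact (graft_word none).symm
  have hne := mt (subList_eq_nil_iff hI).1 hempty
  rw [contract, if_neg hempty, sub, contractForest]
  by_cases h1 : (subList l I).length = 1
  · obtain ⟨t, ht⟩ := List.length_eq_one_iff.1 h1
    rw [ht, red_singleton]
    exact (graft_word (some (red t))).symm
  · have h2 : 2 ≤ (subList l I).length := by
      have := List.length_pos_iff.2 hne
      lia
    rw [red_node h1, graft_of_two_le_length (by simpa using h2)]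

section Comul

variable (K : Type*) [CommSemiring K]

/-- The coproduct `Δ T = ∑ T|I ⊗ T|Iᶜ` of trees, extended to an algebra homomorphism on forests. The
monoid algebra of pairs of forests plays the role of the tensor square. -/
noncomputable def comul : K[Forest] →ₐ[K] K[Forest × Forest] :=
  MonoidAlgebra.lift K _ _ <| FreeMonoid.lift fun t => ∑ I ∈ (range t.deg).powerset,
    .single (word (contract t I), word (contract t (range t.deg \ I))) 1

theorem comul_single (w : Forest) (c : K) :
    comul K (.single w c) = c • comul K (.single w 1) := by
  rw [← map_smul, MonoidAlgebra.smul_single', mul_one]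

theorem comul_single_one : comul K (.single 1 1) = .single (1, 1) 1 :=
  map_one (comul K)

theorem comul_single_of (t : PTree) : comul K (.single (.of t) 1) =
    ∑ I ∈ (range t.deg).powerset,
      .single (word (contract t I), word (contract t (range t.deg \ I))) 1 := by
  rw [comul, MonoidAlgebra.lift_single, one_smul, FreeMonoid.lift_eval_of]

theorem comul_single_word (T : OT) : comul K (.single (word T) 1) =
    ∑ I ∈ (range (degO T)).powerset,
      .single (word (contractO T I), word (contractO T (range (degO T) \ I))) 1 := by
  cases T with
  | none =>
    rw [word_none, comul_single_one]
    exact (sum_singleton _ _).symm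
  | some t => exact comul_single_of K t

theorem coeff_comul_single_word (V W T : OT) :
    (comul K (.single (word T) 1)).coeff (word V, word W) = Ncount V W T := by
  classical
  rw [comul_single_word, MonoidAlgebra.coeff_sum, Finsupp.finsetSum_apply, Ncount, NFinset,
    natCast_card_filter]
  simp only [MonoidAlgebra.coeff_single, Finsupp.single_apply, Prod.mk.injEq, word_injective.eq_iff]

theorem comul_single_ofList (l : List PTree) : comul K (.single (.ofList l) 1) =
    ∑ I ∈ (range (degs l)).powerset,
      .single (.ofList (contractForest l I),
        .ofList (contractForest l (range (degs l) \ I))) 1 := by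
  induction l with
  | nil =>
    rw [FreeMonoid.ofList_nil, comul_single_one]
    exact (sum_singleton _ _).symm
  | cons t l ih =>
    have hmul : (.single (.ofList (t :: l)) 1 : K[Forest]) =
        .single (.of t) 1 * .single (.ofList l) 1 := by
      rw [MonoidAlgebra.single_mul_single, FreeMonoid.ofList_cons, mul_one]
    rw [hmul, map_mul, comul_single_of, ih, sum_mul_sum, ← sum_powerset_range_add, degs_cons]
    refine sum_congr rfl fun I _ => ?_
    simp only [contractForest_cons, headLeaves_range_sdiff, tailLeaves_range_sdiff,
      FreeMonoid.ofList_append, MonoidAlgebra.single_mul_single, Prod.mk_mul_mk, mul_one, word]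

/-- The linear extension of `graft`. -/
noncomputable def graftₗ : K[Forest] →ₗ[K] K[Forest] :=
  MonoidAlgebra.mapDomainLinearMap K K graft

/-- Grafting in both tensor factors. -/
noncomputable def graftProdₗ : K[Forest × Forest] →ₗ[K] K[Forest × Forest] :=
  MonoidAlgebra.mapDomainLinearMap K K (Prod.map graft graft)

theorem comul_single_graft (w : Forest) :
    comul K (.single (graft w) 1) = graftProdₗ K (comul K (.single w 1)) := by
  by_cases hw : 2 ≤ w.length
  · obtain ⟨l, rfl⟩ := FreeMonoid.ofList.surjective w
    rw [graft_of_two_le_length (l := l) hw, comul_single_word, comul_single_ofList, map_sum]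
    have hl : l ≠ [] := by
      rintro rfl
      exact absurd hw (by decide)
    simp only [degO, Option.elim_some, deg_node_of_ne_nil hl]
    refine sum_congr rfl fun I hI => ?_
    rw [graftProdₗ, MonoidAlgebra.mapDomainLinearMap_single, Prod.map_apply,
      ← word_contract_node (mem_powerset.1 hI), ← word_contract_node sdiff_subset]
    rfl
  · obtain ⟨o, rfl⟩ := exists_word_eq hw
    rw [graft_word, comul_single_word, map_sum]
    simp only [graftProdₗ, MonoidAlgebra.mapDomainLinearMap_single, Prod.map_apply, graft_word]

theorem graftProdₗ_comul (r : K[Forest]) :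
    graftProdₗ K (comul K r) = comul K (graftₗ K r) := by
  induction r using MonoidAlgebra.induction_linear with
  | zero => simp
  | add r s hr hs => simp [hr, hs]
  | single w c =>
    rw [graftₗ, MonoidAlgebra.mapDomainLinearMap_single, comul_single, comul_single _ (graft w),
      map_smul, comul_single_graft]

/-- The embedding `r ↦ r ⊗ 1`. -/
noncomputable def inl : K[Forest] →ₐ[K] K[Forest × Forest] :=
  MonoidAlgebra.mapDomainAlgHom K K (MonoidHom.inl _ _)

/-- The embedding `r ↦ 1 ⊗ r`. -/
noncomputable def inr : K[Forest] →ₐ[K] K[Forest × Forest] :=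
  MonoidAlgebra.mapDomainAlgHom K K (MonoidHom.inr _ _)

theorem inl_single (w : Forest) (c : K) : inl K (.single w c) = .single (w, 1) c :=
  MonoidAlgebra.mapDomain_single

theorem inr_single (w : Forest) (c : K) : inr K (.single w c) = .single (1, w) c :=
  MonoidAlgebra.mapDomain_single

theorem commute_inl_inr (r s : K[Forest]) : Commute (inl K r) (inr K s) := by
  induction r using MonoidAlgebra.induction_linear with
  | zero => simp
  | add r r' hr hr' => simpa using hr.add_left hr'
  | single w c =>
    induction s using MonoidAlgebra.induction_linear with
    | zero => simp
    | add s s' hs hs' => simpa using hs.add_right hs'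
    | single w' c' =>
      rw [inl_single, inr_single]
      exact MonoidAlgebra.single_commute_single (by simp [Commute, SemiconjBy]) (Commute.all _ _)

theorem coeff_inl_mul_inr (r s : K[Forest]) (v w : Forest) :
    (inl K r * inr K s).coeff (v, w) = r.coeff v * s.coeff w := by
  classical
  induction r using MonoidAlgebra.induction_linear with
  | zero => simp
  | add r r' hr hr' => simp [add_mul, hr, hr']
  | single u c =>
    induction s using MonoidAlgebra.induction_linear with
    | zero => simp
    | add s s' hs hs' => simp [mul_add, hs, hs']
    | single u' c' =>
      simp only [inl_single, inr_single, MonoidAlgebra.single_mul_single, Prod.mk_mul_mk, mul_one,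
        one_mul, MonoidAlgebra.coeff_single, Finsupp.single_apply, Prod.mk.injEq,
        ite_zero_mul_ite_zero]

theorem graftProdₗ_inl_mul_inr (r s : K[Forest]) :
    graftProdₗ K (inl K r * inr K s) = inl K (graftₗ K r) * inr K (graftₗ K s) := by
  induction r using MonoidAlgebra.induction_linear with
  | zero => simp
  | add r r' hr hr' => simp [add_mul, hr, hr']
  | single w c =>
    induction s using MonoidAlgebra.induction_linear with
    | zero => simp
    | add s s' hs hs' => simp [mul_add, hs, hs']
    | single w' c' =>
      simp only [graftₗ, graftProdₗ, MonoidAlgebra.mapDomainLinearMap_single, inl_single,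
        inr_single, MonoidAlgebra.single_mul_single, Prod.mk_mul_mk, one_mul, mul_one,
        Prod.map_apply]

theorem comul_single_word_x : comul K (.single (word (some x)) 1) =
    inl K (.single (word (some x)) 1) + inr K (.single (word (some x)) 1) := by
  have hdeg : degO (some x) = 1 := deg_node []
  have hpow : (range 1).powerset = {∅, {0}} := by decide
  have hfull : contractO (some x) {0} = some x := by
    simp [contractO, contract, x, sub, subList, red_node]
  have hempty : contractO (some x) ∅ = none := by simp [contractO, contract]
  rw [comul_single_word, hdeg, hpow, sum_pair (by decide), inl_single, inr_single, add_comm,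
    range_one, sdiff_self, sdiff_empty, hfull, hempty]
  rfl

end Comul

section Finiteness

theorem deg_add_length_le {t : PTree} {l : List PTree} (ht : t ∈ l) :
    deg t + l.length ≤ degs l + 1 := by
  induction l with
  | nil => simp at ht
  | cons s l ih =>
    obtain rfl | ht := List.mem_cons.1 ht
    · simp only [List.length_cons, degs_cons]
      linarith [length_le_degs l]
    · simp only [List.length_cons, degs_cons]
      linarith [ih ht, deg_pos s]

theorem finite_lists_of_length_le {α : Type*} {s : Set α} (hs : s.Finite) (n : ℕ) :
    {l : List α | (∀ a ∈ l, a ∈ s) ∧ l.length ≤ n}.Finite := by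
  have := hs.to_subtype
  refine ((List.finite_length_le s n).image (List.map (↑))).subset fun l hl => ?_
  obtain ⟨m, rfl⟩ : l ∈ Set.range (List.map ((↑) : s → α)) := Set.range_list_map_coe s ▸ hl.1
  exact ⟨m, by simpa using hl.2, rfl⟩

theorem finite_reducedTrees_deg_le (n : ℕ) : {t : PTree | t.Reduced ∧ t.deg ≤ n}.Finite := by
  induction n with
  | zero => exact Set.finite_empty.subset fun t ht => (deg_pos t).not_ge ht.2
  | succ n ih =>
    refine ((finite_lists_of_length_le ih (n + 1)).image node).subset ?_
    rintro _ ⟨⟨l, hlen, hl⟩, hdeg⟩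
    obtain rfl | hne := eq_or_ne l []
    · exact ⟨[], by simp, rfl⟩
    rw [deg_node_of_ne_nil hne] at hdeg
    have hlen₀ := List.length_pos_iff.2 hne
    refine ⟨l, ⟨fun t ht => ⟨hl t ht, ?_⟩, (length_le_degs l).trans hdeg⟩, rfl⟩
    have := deg_add_length_le ht
    lia

theorem finite_reducedOT (n : ℕ) : {T : OT | ROT T ∧ degO T = n}.Finite := by
  refine (((finite_reducedTrees_deg_le n).image some).insert none).subset ?_
  rintro (_ | t) ⟨hT, hdeg⟩
  · exact Set.mem_insert _ _
  · exact Set.mem_insert_of_mem _ ⟨t, ⟨hT t rfl, hdeg.le⟩, rfl⟩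

theorem finite_reducedForests (n : ℕ) :
    {l : List PTree | (∀ t ∈ l, t.Reduced) ∧ degs l = n}.Finite := by
  refine (finite_lists_of_length_le (finite_reducedTrees_deg_le n) n).subset fun l hl => ?_
  exact ⟨fun t ht => ⟨hl.1 t ht, (List.le_sum_of_mem (List.mem_map_of_mem ht)).trans_eq hl.2⟩,
    (length_le_degs l).trans_eq hl.2⟩

/-- The elements of `PRT'` of degree `n`. -/
noncomputable def reducedOT (n : ℕ) : Finset OT :=
  (finite_reducedOT n).toFinset

/-- The elements of `PRT` of degree `n`. -/
noncomputable def reducedTrees (n : ℕ) : Finset PTree :=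
  (reducedOT n).eraseNone

/-- The forests of reduced trees with `n` leaves in total. -/
noncomputable def reducedForests (n : ℕ) : Finset (List PTree) :=
  (finite_reducedForests n).toFinset

variable {n : ℕ}

theorem mem_reducedOT {T : OT} : T ∈ reducedOT n ↔ ROT T ∧ degO T = n :=
  Set.Finite.mem_toFinset _

theorem mem_reducedTrees {t : PTree} : t ∈ reducedTrees n ↔ t.Reduced ∧ t.deg = n := by
  rw [reducedTrees, mem_eraseNone, mem_reducedOT]
  simp [ROT, degO]

theorem mem_reducedForests {l : List PTree} :
    l ∈ reducedForests n ↔ (∀ t ∈ l, t.Reduced) ∧ degs l = n :=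
  Set.Finite.mem_toFinset _

theorem sum_reducedForests_length_eq_zero {M : Type*} [AddCommMonoid M] (F : List PTree → M) :
    ∑ l ∈ reducedForests n with l.length = 0, F l = if n = 0 then F [] else 0 := by
  have hmem (l : List PTree) : l ∈ reducedForests n ∧ l.length = 0 ↔ l = [] ∧ n = 0 := by
    rw [List.length_eq_zero_iff, mem_reducedForests, and_comm]
    exact and_congr_right fun hl => by simp [hl, eq_comm]
  split_ifs with hn
  · have hfilter : {l ∈ reducedForests n | l.length = 0} = {[]} := by
      ext l
      rw [mem_filter, hmem, mem_singleton, and_iff_left hn]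
    rw [hfilter, sum_singleton]
  · exact sum_eq_zero fun l hl => absurd ((hmem l).1 (mem_filter.1 hl)).2 hn

theorem sum_reducedForests_length_succ {M : Type*} [AddCommMonoid M] (m : ℕ)
    (F : List PTree → M) :
    ∑ l ∈ reducedForests n with l.length = m + 1, F l =
      ∑ p ∈ HasAntidiagonal.antidiagonal n, ∑ t ∈ reducedTrees p.1,
        ∑ l ∈ reducedForests p.2 with l.length = m, F (t :: l) := by
  simp_rw [← sum_product']
  rw [sum_sigma']
  symm
  refine sum_nbij (fun a => a.2.1 :: a.2.2) ?_ ?_ ?_ fun _ _ => rfl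
  · rintro ⟨⟨i, j⟩, t, l⟩ h
    simp only [mem_sigma, HasAntidiagonal.mem_antidiagonal, mem_product, mem_filter,
      mem_reducedTrees, mem_reducedForests] at h ⊢
    obtain ⟨rfl, ⟨ht, rfl⟩, ⟨hl, rfl⟩, rfl⟩ := h
    simpa [ht] using hl
  · rintro ⟨⟨i, j⟩, t, l⟩ h ⟨⟨i', j'⟩, t', l'⟩ h' heq
    simp only [coe_sigma, Set.mem_sigma_iff, mem_coe, mem_product, mem_filter, mem_reducedTrees,
      mem_reducedForests] at h h'
    grind
  · rintro (_ | ⟨t, l⟩) hl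
    · simp at hl
    · simp only [coe_filter, Set.mem_ofPred_eq, mem_reducedForests, List.forall_mem_cons] at hl
      refine ⟨⟨(t.deg, degs l), t, l⟩, ?_, rfl⟩
      simp_all [mem_reducedTrees, mem_reducedForests]

/-- The trees grafted at the root of a tree. -/
def children : PTree → List PTree
  | node l => l

-- The forests of one tree give the terms `F [t]`; any other forest consists of the children of a
-- unique reduced tree.
theorem sum_reducedForests {M : Type*} [AddCommMonoid M] (hn : 2 ≤ n) (F : List PTree → M) :
    ∑ l ∈ reducedForests n, F l = ∑ t ∈ reducedTrees n, (F [t] + F t.children) := by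
  rw [sum_add_distrib, ← sum_filter_add_sum_filter_not _ (fun l => l.length = 1)]
  congr 1
  · refine (sum_nbij (fun t => [t]) (fun t ht => ?_) (fun _ _ _ _ => List.singleton_inj.1) ?_
      fun _ _ => rfl).symm
    · simpa [mem_reducedForests, mem_reducedTrees] using ht
    · intro l hl
      simp only [coe_filter, Set.mem_ofPred_eq] at hl
      obtain ⟨t, rfl⟩ := List.length_eq_one_iff.1 hl.2
      exact ⟨t, by simpa [mem_reducedForests, mem_reducedTrees] using hl.1, rfl⟩
  · refine sum_nbij' node children (fun l hl => ?_) (fun t ht => ?_) (fun _ _ => rfl)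
      (fun ⟨_⟩ _ => rfl) fun _ _ => rfl
    · simp only [mem_filter, mem_reducedForests] at hl
      refine mem_reducedTrees.2 ⟨.node l hl.2 hl.1.1, ?_⟩
      rw [deg_node, hl.1.2]
      lia
    · obtain ⟨⟨l, hlen, hl⟩, hdeg⟩ := mem_reducedTrees.1 ht
      refine mem_filter.2 ⟨mem_reducedForests.2 ⟨hl, ?_⟩, hlen⟩
      rw [deg_node] at hdeg
      simp only [children]
      lia

end Finiteness

section Exp

theorem ratFunc_X_pow_ne_X (K : Type*) [Field K] {n : ℕ} (hn : 2 ≤ n) :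
    (RatFunc.X : RatFunc K) ^ n ≠ RatFunc.X := by
  intro h
  rw [← RatFunc.algebraMap_X, ← map_pow] at h
  have hdeg := congrArg Polynomial.natDegree (RatFunc.algebraMap_injective K h)
  simp only [Polynomial.natDegree_pow, Polynomial.natDegree_X] at hdeg
  lia

theorem qChoose_eq_ringChoose (m : ℕ) : qChoose m = Ring.choose (RatFunc.X : ℚ(q)) m :=
  (ringChoose_eq_prod_range_div_factorial _ _).symm

theorem aTree_node {l : List PTree} (hl : l ≠ []) : aTree (node l) =
    qChoose l.length / (RatFunc.X ^ degs l - RatFunc.X) * (l.map aTree).prod := by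
  rw [aTree, deg_node_of_ne_nil hl]
  · exact congrArg _ (congrArg _ (List.attach_map_val (f := aTree)))
  · exact hl

theorem ringChoose_mul_prod_aTree {l : List PTree} (hl : 2 ≤ degs l) :
    Ring.choose (RatFunc.X : ℚ(q)) l.length * (l.map aTree).prod =
      (RatFunc.X ^ degs l - RatFunc.X) * aTree (node l) := by
  have hne : l ≠ [] := by
    rintro rfl
    simp at hl
  rw [← qChoose_eq_ringChoose, aTree_node hne]
  field_simp [sub_ne_zero.2 (ratFunc_X_pow_ne_X ℚ hl)]

/-- The generic planar exponential series `EXP = ∑ a(T) T`, graded by degree. -/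
noncomputable def EXP : ℚ(q)[Forest]⟦X⟧ :=
  .mk fun n => ∑ T ∈ reducedOT n, .single (word T) (aCoeff T)

theorem reducedOT_zero : reducedOT 0 = {none} := by
  ext (_ | t)
  · simp [mem_reducedOT, ROT, degO]
  · simp [mem_reducedOT, degO, (deg_pos t).ne']

theorem reducedTrees_one : reducedTrees 1 = {x} := by
  ext t
  rw [mem_reducedTrees, mem_singleton]
  constructor
  · rintro ⟨⟨l, hlen, _⟩, hdeg⟩
    have := length_le_degs l
    rw [deg_node] at hdeg
    rw [x, List.length_eq_zero_iff.1 (by lia : l.length = 0)]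
  · rintro rfl
    exact ⟨.node [] (by simp) (by simp), deg_node []⟩

theorem coeff_EXP (n : ℕ) :
    coeff n EXP = ∑ T ∈ reducedOT n, .single (word T) (aCoeff T) :=
  coeff_mk _ _

theorem coeff_zero_EXP : coeff 0 EXP = 1 := by
  rw [coeff_EXP, reducedOT_zero, sum_singleton]
  rfl

theorem coeff_EXP_eq_sum_reducedTrees {n : ℕ} (hn : n ≠ 0) :
    coeff n EXP = ∑ t ∈ reducedTrees n, .single (.of t) t.aTree := by
  rw [coeff_EXP, reducedTrees, sum_eraseNone]
  refine sum_congr rfl fun T hT => ?_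
  obtain _ | t := T
  · exact absurd (mem_reducedOT.1 hT).2.symm hn
  · rfl

theorem coeff_EXP_sub_one (n : ℕ) :
    coeff n (EXP - 1) = ∑ t ∈ reducedTrees n, .single (.of t) t.aTree := by
  rw [map_sub, coeff_one]
  split_ifs with hn
  · rw [hn, coeff_zero_EXP, sub_self, reducedTrees, reducedOT_zero]
    rfl
  · rw [coeff_EXP_eq_sum_reducedTrees hn, sub_zero]

theorem coeff_EXP_sub_one_pow (n m : ℕ) : coeff n ((EXP - 1) ^ m) =
    ∑ l ∈ reducedForests n with l.length = m, .single (.ofList l) (l.map aTree).prod := by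
  induction m generalizing n with
  | zero =>
    rw [sum_reducedForests_length_eq_zero, pow_zero, coeff_one]
    rfl
  | succ m ih =>
    rw [sum_reducedForests_length_succ, pow_succ', coeff_mul]
    refine sum_congr rfl fun p _ => ?_
    rw [coeff_EXP_sub_one, ih, sum_mul_sum]
    refine sum_congr rfl fun t _ => sum_congr rfl fun l _ => ?_
    rw [MonoidAlgebra.single_mul_single, List.map_cons, List.prod_cons, FreeMonoid.ofList_cons]

theorem coeff_binomialPow_EXP (r : ℚ(q)) (n : ℕ) : coeff n (binomialPow r EXP) =
    ∑ l ∈ reducedForests n, .single (.ofList l) (Ring.choose r l.length * (l.map aTree).prod) := by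
  have hlen : ∀ l ∈ reducedForests n, l.length ∈ range (n + 1) := fun l hl =>
    mem_range_succ_iff.2 ((length_le_degs l).trans_eq (mem_reducedForests.1 hl).2)
  rw [coeff_binomialPow, ← sum_fiberwise_of_maps_to hlen]
  refine sum_congr rfl fun m _ => ?_
  rw [coeff_EXP_sub_one_pow, smul_sum]
  refine sum_congr rfl fun l hl => ?_
  rw [MonoidAlgebra.smul_single', (mem_filter.1 hl).2]

theorem graftₗ_single_word (T : OT) (c : ℚ(q)) :
    graftₗ ℚ(q) (.single (word T) c) = .single (word T) c := by
  rw [graftₗ, MonoidAlgebra.mapDomainLinearMap_single, graft_word]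

theorem graftₗ_coeff_EXP (n : ℕ) :
    graftₗ ℚ(q) (coeff n EXP) = coeff n EXP := by
  simp only [coeff_EXP, map_sum, graftₗ_single_word]

theorem graftₗ_singleton_add_children {t : PTree} (ht : t.Reduced) (hdeg : 2 ≤ t.deg) :
    graftₗ ℚ(q) (.single (.ofList [t]) (RatFunc.X * aTree t) +
      .single (.ofList t.children)
        (Ring.choose (RatFunc.X : ℚ(q)) t.children.length * (t.children.map aTree).prod)) =
      (RatFunc.X : ℚ(q)) ^ t.deg • .single (.of t) (aTree t) := by
  obtain ⟨l, hlen, _⟩ := ht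
  have hne : l ≠ [] := by
    rintro rfl
    simp [deg_node] at hdeg
  have hlen₂ : 2 ≤ l.length := by
    have := List.length_pos_iff.2 hne
    lia
  rw [deg_node_of_ne_nil hne] at hdeg ⊢
  rw [children, ringChoose_mul_prod_aTree hdeg, map_add, FreeMonoid.ofList_singleton, ← word_some,
    graftₗ_single_word, graftₗ, MonoidAlgebra.mapDomainLinearMap_single,
    graft_of_two_le_length hlen₂, ← MonoidAlgebra.single_add, MonoidAlgebra.smul_single', ← add_mul,
    add_sub_cancel]

theorem isExponential_EXP : IsExponential RatFunc.X (graftₗ ℚ(q)) EXP := by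
  refine ⟨coeff_zero_eq_constantCoeff_apply EXP ▸ coeff_zero_EXP, graftₗ_coeff_EXP, fun n => ?_⟩
  obtain rfl | rfl | hn : n = 0 ∨ n = 1 ∨ 2 ≤ n := by lia
  · rw [coeff_zero_binomialPow, ← coeff_zero_EXP, graftₗ_coeff_EXP, pow_zero, one_smul]
  · rw [coeff_one_binomialPow, map_smul, graftₗ_coeff_EXP, pow_one]
  rw [coeff_binomialPow_EXP, sum_reducedForests hn, map_sum,
    coeff_EXP_eq_sum_reducedTrees (by lia), smul_sum]
  refine sum_congr rfl fun t ht => ?_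
  obtain ⟨hred, rfl⟩ := mem_reducedTrees.1 ht
  simpa using graftₗ_singleton_add_children hred hn

theorem coeff_one_EXP : coeff 1 EXP = .single (word (some x)) 1 := by
  rw [coeff_EXP_eq_sum_reducedTrees one_ne_zero, reducedTrees_one, sum_singleton, x, aTree]
  rfl

theorem mapAlgHom_comul_EXP :
    mapAlgHom (comul ℚ(q)) EXP = mapAlgHom (inl ℚ(q)) EXP * mapAlgHom (inr ℚ(q)) EXP := by
  refine (isExponential_EXP.map (comul _) (graftProdₗ_comul _)).ext
    (isExponential_EXP.mul isExponential_EXP (inl _) (inr _) (commute_inl_inr _)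
      (graftProdₗ_inl_mul_inr _)) (fun n => ratFunc_X_pow_ne_X ℚ) ?_
  rw [coeff_mul, Nat.sum_antidiagonal_eq_sum_range_succ_mk, sum_range_succ, sum_range_one]
  simp only [coeff_mapAlgHom, coeff_zero_EXP, coeff_one_EXP, comul_single_word_x, map_one,
    tsub_zero, tsub_self, one_mul, mul_one, add_comm]

theorem coeff_coeff_EXP {T : OT} (hT : ROT T) (n : ℕ) :
    (coeff n EXP).coeff (word T) = if n = degO T then aCoeff T else 0 := by
  classical
  have hmem : T ∈ reducedOT n ↔ n = degO T := by
    rw [mem_reducedOT, eq_comm, and_iff_right hT]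
  rw [coeff_EXP, MonoidAlgebra.coeff_sum, Finsupp.finsetSum_apply]
  simp only [MonoidAlgebra.coeff_single, Finsupp.single_apply, word_injective.eq_iff]
  rw [sum_ite_eq', if_congr hmem rfl rfl]

theorem coeff_mapAlgHom_comul_EXP (V W : OT) (n : ℕ) :
    (coeff n (mapAlgHom (comul ℚ(q)) EXP)).coeff (word V, word W) =
      ∑ T ∈ reducedOT n, aCoeff T * Ncount V W T := by
  rw [coeff_mapAlgHom, coeff_EXP, map_sum, MonoidAlgebra.coeff_sum, Finsupp.finsetSum_apply]
  refine sum_congr rfl fun T _ => ?_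
  rw [comul_single, MonoidAlgebra.coeff_smul, Finsupp.smul_apply, coeff_comul_single_word,
    smul_eq_mul]

theorem coeff_mapAlgHom_inl_mul_mapAlgHom_inr_EXP {V W : OT} (hV : ROT V) (hW : ROT W) :
    (coeff (degO V + degO W) (mapAlgHom (inl ℚ(q)) EXP * mapAlgHom (inr ℚ(q)) EXP)).coeff
      (word V, word W) = aCoeff V * aCoeff W := by
  rw [coeff_mul, MonoidAlgebra.coeff_sum, Finsupp.finsetSum_apply]
  simp only [coeff_mapAlgHom, coeff_inl_mul_inr, coeff_coeff_EXP hV, coeff_coeff_EXP hW,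
    ite_zero_mul_ite_zero, ← Prod.mk_inj]
  rw [sum_ite_eq']
  exact if_pos (by simp)

end Exp

end PTree

/-- For all `V, W ∈ PRT'`, the coefficients of the generic planar
exponential series satisfy the quadratic relation
`a(V)·a(W) = Σ_{T ∈ PRT', deg T = deg V + deg W} a(T)·#N_{V,W}(T)`,
the sum being finite. -/
theorem exp_coeff_quadratic (V W : OT) (hV : ROT V) (hW : ROT W) :
    {T : OT | (ROT T ∧ degO T = degO V + degO W) ∧
        aCoeff T * (Ncount V W T : RatFunc ℚ) ≠ 0}.Finite ∧
      aCoeff V * aCoeff W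
        = ∑ᶠ (T : OT) (_ : ROT T ∧ degO T = degO V + degO W),
            aCoeff T * (Ncount V W T : RatFunc ℚ) := by
  refine ⟨(finite_reducedOT _).subset fun T hT => hT.1, ?_⟩
  calc
    aCoeff V * aCoeff W = (coeff (degO V + degO W)
        (mapAlgHom (inl ℚ(q)) EXP * mapAlgHom (inr ℚ(q)) EXP)).coeff (word V, word W) :=
      (coeff_mapAlgHom_inl_mul_mapAlgHom_inr_EXP hV hW).symm
    _ = (coeff (degO V + degO W) (mapAlgHom (comul ℚ(q)) EXP)).coeff (word V, word W) := by
      rw [mapAlgHom_comul_EXP]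
    _ = ∑ T ∈ reducedOT (degO V + degO W), aCoeff T * (Ncount V W T : RatFunc ℚ) :=
      coeff_mapAlgHom_comul_EXP V W _
    _ = _ := (finsum_mem_eq_finite_toFinset_sum _ (finite_reducedOT _)).symm
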